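/- Let ψ be a function from the set of factors of ω to ℝ such that: ψ(α) > 0 for every factor α; ψ(0) + ψ(1) = 1; and for every factor α, ψ(α) = Σ_{i ∈ {0,1}, iα a factor} ψ(iα) and ψ(α) = Σ_{i ∈ {0,1}, αi a factor} ψ(αi). Then for every n ≥ 0: ψ(0^{(n)} 0^{(n)}) = ψ(1^{(n)} 1^{(n)}) = 1/(6·2^n) and ψ(0^{(n)} 1^{(n)}) = ψ(1^{(n)} 0^{(n)}) = 1/(3·2^n). -/

import Mathlib

/-- One-sided Thue–Morse sequence: parity of the binary digit sum. -/
def tm (n : ℕ) : ℕ := (Nat.digits 2 n).sum % 2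

/-- Two-sided Thue–Morse sequence `ω : ℤ → {0,1}`. -/
def tmZ (n : ℤ) : ℕ := if 0 ≤ n then tm n.toNat else tm (-n - 1).toNat

/-- The block `ω_[m, m+k-1]` of the two-sided Thue–Morse sequence. -/
def tmBlock (m : ℤ) (k : ℕ) : List ℕ := (List.range k).map fun j => tmZ (m + j)

/-- A (nonempty) word is a factor of the two-sided Thue–Morse sequence. -/
def IsFactor (α : List ℕ) : Prop := α ≠ [] ∧ ∃ m : ℤ, α = tmBlock m α.length

/-- The words `i⁽ⁿ⁾`: `blk i 0 = [i]`, `blk i (n+1) = blk i n ++ blk (1-i) n`. -/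
def blk : ℕ → ℕ → List ℕ
  | i, 0 => [i]
  | i, n + 1 => blk i n ++ blk (1 - i) n

theorem tm_even (n : ℕ) : tm (2 * n) = tm n := by
  unfold tm
  rcases Nat.eq_zero_or_pos n with h | h
  · subst h; simp
  · rw [Nat.digits_def' (by norm_num) (by omega)]
    simp

theorem tm_lt (n : ℕ) : tm n < 2 := Nat.mod_lt _ (by norm_num)

theorem tm_odd (n : ℕ) : tm (2 * n + 1) = 1 - tm n := by
  unfold tm
  rw [Nat.digits_def' (by norm_num) (by omega)]
  have h1 : (2 * n + 1) % 2 = 1 := by omega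
  have h2 : (2 * n + 1) / 2 = n := by omega
  rw [h1, h2, List.sum_cons]
  omega

theorem tm_pow_add (r a j : ℕ) (h : j < 2 ^ r) : tm (a * 2 ^ r + j) = (tm a + tm j) % 2 := by
  induction r generalizing j with
  | zero =>
    have : j = 0 := by simpa using h
    subst this
    have h0 : tm 0 = 0 := by simp [tm]
    have := tm_lt a
    simp only [pow_zero, mul_one, add_zero, h0]; omega
  | succ r ih =>
    obtain ⟨q, hq | hq⟩ := Nat.even_or_odd' j
    · have := ih q (by rw [pow_succ] at h; omega)
      have e : a * 2 ^ (r + 1) + j = 2 * (a * 2 ^ r + q) := by rw [hq]; ring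
      rw [e, tm_even, this, hq, tm_even]
    · have := ih q (by rw [pow_succ] at h; omega)
      have e : a * 2 ^ (r + 1) + j = 2 * (a * 2 ^ r + q) + 1 := by rw [hq]; ring
      have := tm_lt q
      have := tm_lt a
      rw [e, tm_odd, ih q (by rw [pow_succ] at h; omega), hq, tm_odd]; omega

theorem tm_refl (r i j : ℕ) (h : i + j + 1 = 2 ^ r) : tm j = (tm i + r) % 2 := by
  induction r generalizing i j with
  | zero =>
    have : i = 0 ∧ j = 0 := by constructor <;> simp at h <;> omega
    obtain ⟨rfl, rfl⟩ := this
    simp [tm]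
  | succ r ih =>
    rw [pow_succ] at h
    obtain ⟨p, hp | hp⟩ := Nat.even_or_odd' i <;> obtain ⟨q, hq | hq⟩ := Nat.even_or_odd' j
    · omega
    · have := ih p q (by omega)
      have := tm_lt p
      have := tm_lt q
      rw [hp, hq, tm_even, tm_odd]; omega
    · have := ih p q (by omega)
      have := tm_lt p
      have := tm_lt q
      rw [hp, hq, tm_even, tm_odd]; omega
    · omega

theorem tmZ_shift (r : ℕ) (z : ℤ) (h1 : -(2 ^ (2 * r) : ℕ) ≤ z) (h2 : z < (2 ^ (2 * r) : ℕ)) :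
    tmZ z = tm (6 * 2 ^ (2 * r) + z).toNat := by
  generalize hN : 2 ^ (2 * r) = N at *
  have t6 : tm 6 = 0 := by norm_num [tm]
  have t5 : tm 5 = 0 := by norm_num [tm]
  have hc : (2 : ℤ) ^ (2 * r) = (N : ℤ) := by rw [← hN]; push_cast; rfl
  rw [hc]
  unfold tmZ
  split_ifs with h
  · have e : ((6 : ℤ) * N + z).toNat = 6 * 2 ^ (2 * r) + z.toNat := by rw [hN]; omega
    have := tm_lt z.toNat
    rw [e, tm_pow_add _ _ _ (by rw [hN]; omega), t6]; omega
  · have e : ((6 : ℤ) * N + z).toNat = 5 * 2 ^ (2 * r) + ((N : ℤ) + z).toNat := by rw [hN]; omega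
    have := tm_lt (-z - 1).toNat
    rw [e, tm_pow_add _ _ _ (by rw [hN]; omega), t5,
      tm_refl (2 * r) (-z - 1).toNat ((N : ℤ) + z).toNat (by rw [hN]; omega)]
    omega

def At : ℕ → List ℕ → Prop
  | _, [] => True
  | m, x :: l => x = tm m ∧ At (m + 1) l

def S : List ℕ → List ℕ
  | [] => []
  | x :: l => x :: (1 - x) :: S l

def F (l : List ℕ) : Prop := ∃ m, At m l

theorem At_append (m : ℕ) (a b : List ℕ) : At m (a ++ b) ↔ At m a ∧ At (m + a.length) b := by
  induction a generalizing m with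
  | nil => simp [At]
  | cons x a ih =>
    simp only [List.cons_append, At, ih, List.length_cons, and_assoc]
    rw [show m + 1 + a.length = m + (a.length + 1) by omega]

theorem At_S (m : ℕ) (l : List ℕ) : At (2 * m) (S l) ↔ At m l := by
  induction l generalizing m with
  | nil => simp [At, S]
  | cons x l ih =>
    have := ih (m + 1)
    simp only [At, S, tm_even, tm_odd]
    rw [show 2 * m + 1 + 1 = 2 * (m + 1) by ring, this]
    constructor
    · rintro ⟨h, -, h'⟩; exact ⟨h, h'⟩
    · rintro ⟨h, h'⟩; exact ⟨h, by rw [h], h'⟩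

theorem S_append (a b : List ℕ) : S (a ++ b) = S a ++ S b := by
  induction a with
  | nil => rfl
  | cons x a ih => simp [S, ih]

theorem S_length (a : List ℕ) : (S a).length = 2 * a.length := by
  induction a with
  | nil => rfl
  | cons x a ih => simp [S, ih]; ring

theorem no_three (m x : ℕ) (h0 : x = tm m) (h1 : x = tm (m + 1)) (h2 : x = tm (m + 2)) : False := by
  obtain ⟨q, hq | hq⟩ := Nat.even_or_odd' m
  · subst hq
    have := tm_lt q
    rw [tm_even] at h0; rw [tm_odd] at h1; omega
  · subst hq
    have := tm_lt (q + 1)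
    rw [show 2 * q + 1 + 1 = 2 * (q + 1) by ring, tm_even] at h1
    rw [show 2 * q + 1 + 2 = 2 * (q + 1) + 1 by ring, tm_odd] at h2; omega

theorem sync (m : ℕ) (l : List ℕ) (hl : 2 ≤ l.length) (h : At m (S l)) : ∃ q, m = 2 * q := by
  obtain ⟨q, hq | hq⟩ := Nat.even_or_odd' m
  · exact ⟨q, hq⟩
  · exfalso
    match l, hl with
    | x :: y :: l, _ =>
      simp only [S, At] at h
      obtain ⟨h1, h2, h3, h4, -⟩ := h
      subst hq
      rw [tm_odd] at h1
      rw [show 2 * q + 1 + 1 = 2 * (q + 1) by ring, tm_even] at h2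
      rw [show 2 * q + 1 + 1 + 1 = 2 * (q + 1) + 1 by ring, tm_odd] at h3
      rw [show 2 * q + 1 + 1 + 1 + 1 = 2 * (q + 2) by ring, tm_even] at h4
      have := tm_lt q
      have := tm_lt (q + 1)
      have := tm_lt (q + 2)
      exact no_three q (tm q) rfl (by omega) (by omega)

theorem nf_left (i : ℕ) (l : List ℕ) (hl : 2 ≤ l.length) : ¬ F (i :: i :: S l) := by
  rintro ⟨m, h1, h2, h3⟩
  obtain ⟨q, hq⟩ := sync _ _ hl h3
  obtain ⟨p, rfl⟩ : ∃ p, q = p + 1 := ⟨q - 1, by omega⟩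
  have : m = 2 * p := by omega
  subst this
  rw [tm_even] at h1; rw [tm_odd] at h2
  have := tm_lt p
  omega

theorem nf_right (i : ℕ) (l : List ℕ) (hl : 2 ≤ l.length) : ¬ F (S l ++ [i, i]) := by
  rintro ⟨m, h⟩
  rw [At_append] at h
  obtain ⟨h3, h1, h2, -⟩ := h
  obtain ⟨q, hq⟩ := sync _ _ hl h3
  rw [S_length, hq, show 2 * q + 2 * l.length = 2 * (q + l.length) by ring] at h1 h2
  rw [tm_even] at h1; rw [tm_odd] at h2
  have := tm_lt (q + l.length)
  omega

theorem F_S {l : List ℕ} (h : F l) : F (S l) := by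
  obtain ⟨m, h⟩ := h
  exact ⟨2 * m, (At_S _ _).2 h⟩

theorem F_of_S {l : List ℕ} (hl : 2 ≤ l.length) (h : F (S l)) : F l := by
  obtain ⟨m, h⟩ := h
  obtain ⟨q, rfl⟩ := sync _ _ hl h
  exact ⟨q, (At_S _ _).1 h⟩

theorem F_tail {x : ℕ} {l : List ℕ} (h : F (x :: l)) : F l := by
  obtain ⟨m, -, h⟩ := h
  exact ⟨_, h⟩

theorem F_left {a b : List ℕ} (h : F (a ++ b)) : F a := by
  obtain ⟨m, h⟩ := h
  exact ⟨_, ((At_append _ _ _).1 h).1⟩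

theorem At_iff (m : ℕ) (l : List ℕ) : At m l ↔ l = (List.range l.length).map fun j => tm (m + j) := by
  induction l generalizing m with
  | nil => simp [At]
  | cons x l ih =>
    rw [At, ih, List.length_cons, List.range_succ_eq_map, List.map_cons, List.map_map, List.cons.injEq]
    have : ((fun j => tm (m + j)) ∘ Nat.succ) = fun j => tm (m + 1 + j) := by
      funext j; simp only [Function.comp]; congr 1; omega
    rw [this, add_zero]

theorem tmBlock_eq (m : ℤ) (k : ℕ) :
    tmBlock m k = (List.range k).map fun j : ℕ => tmZ (m + (j : ℤ)) := by
  unfold tmBlock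
  have : (do let a ← List.range k; pure (a : ℤ)) = (List.range k).map fun j : ℕ => (j : ℤ) := by
    exact List.flatMap_pure_eq_map _ _
  rw [this, List.map_map]
  rfl

theorem isFactor_iff (l : List ℕ) : IsFactor l ↔ l ≠ [] ∧ F l := by
  unfold IsFactor F
  simp only [tmBlock_eq]
  refine and_congr_right fun _ => ⟨?_, ?_⟩
  · rintro ⟨m, h⟩
    let r := m.natAbs + l.length
    have hr : r < 2 ^ (2 * r) := lt_of_lt_of_le (Nat.lt_two_pow_self (n := r))
      (Nat.pow_le_pow_right (by norm_num) (by omega))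
    have hc : ((2 : ℤ) ^ (2 * r)) = ((2 ^ (2 * r) : ℕ) : ℤ) := by push_cast; rfl
    refine ⟨(6 * 2 ^ (2 * r) + m).toNat, ?_⟩
    rw [At_iff]
    refine h.trans (List.map_congr_left fun j hj => ?_)
    rw [List.mem_range] at hj
    rw [tmZ_shift r (m + j) (by omega) (by omega)]
    congr 1
    rw [hc]
    omega
  · rintro ⟨m, h⟩
    refine ⟨m, ?_⟩
    rw [At_iff] at h
    refine h.trans (List.map_congr_left fun j _ => ?_)
    simp only [tmZ]
    rw [if_pos (by omega)]
    congr 1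

structure P (φ : List ℕ → ℝ) : Prop where
  pos : ∀ l, 2 ≤ l.length → F l → 0 < φ l
  zero : ∀ l, 2 ≤ l.length → ¬ F l → φ l = 0
  left : ∀ l, 2 ≤ l.length → φ l = φ (0 :: l) + φ (1 :: l)
  right : ∀ l, 2 ≤ l.length → φ l = φ (l ++ [0]) + φ (l ++ [1])

theorem P.step {φ : List ℕ → ℝ} (h : P φ) : P (fun l => φ (S l)) where
  pos l hl hF := h.pos _ (by rw [S_length]; omega) (F_S hF)
  zero l hl hF := h.zero _ (by rw [S_length]; omega) (fun h' => hF (F_of_S hl h'))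
  left l hl := by
    have hS := S_length l
    have e := h.left (S l) (by omega)
    have e0 := h.left (0 :: S l) (by simp; omega)
    have e1 := h.left (1 :: S l) (by simp; omega)
    have z0 := h.zero (0 :: 0 :: S l) (by simp) (nf_left _ _ hl)
    have z1 := h.zero (1 :: 1 :: S l) (by simp) (nf_left _ _ hl)
    simp only [S, Nat.sub_zero, Nat.sub_self]
    linarith
  right l hl := by
    have hS := S_length l
    have e := h.right (S l) (by omega)
    have e0 := h.right (S l ++ [0]) (by simp; omega)
    have e1 := h.right (S l ++ [1]) (by simp; omega)
    have z0 := h.zero (S l ++ [0, 0]) (by simp) (nf_right _ _ hl)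
    have z1 := h.zero (S l ++ [1, 1]) (by simp) (nf_right _ _ hl)
    simp only [List.append_assoc, List.cons_append, List.nil_append] at e0 e1
    simp only [S_append, S, Nat.sub_zero, Nat.sub_self]
    linarith

theorem nf3 (x : ℕ) (l : List ℕ) : ¬ F (x :: x :: x :: l) := by
  rintro ⟨m, h0, h1, h2, -⟩
  exact no_three m x h0 h1 h2

theorem P.cd {φ : List ℕ → ℝ} (h : P φ) : φ [0, 1] = φ [1, 0] ∧ φ [1, 1] = φ [1, 1, 0] := by
  have z := h.zero [1, 1, 1] (by simp) (nf3 _ _)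
  have e1 := h.right [0, 1] (by simp)
  have e2 := h.left [1, 0] (by simp)
  have e3 := h.left [1, 1] (by simp)
  have e4 := h.right [1, 1] (by simp)
  simp only [List.cons_append, List.nil_append] at *
  constructor <;> linarith

theorem P.next {φ : List ℕ → ℝ} (h : P φ) :
    φ (S [1, 0]) = φ [0, 0] ∧ φ (S [0, 1]) = φ [1, 1] := by
  have z1 := h.zero [1, 1, 1] (by simp) (nf3 _ _)
  have z2 := h.zero [1, 1, 1, 0] (by simp) (nf3 _ _)
  have z3 := h.zero [0, 0, 0] (by simp) (nf3 _ _)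
  have z4 := h.zero [0, 0, 0, 1] (by simp) (nf3 _ _)
  have e1 := h.right [0, 0] (by simp)
  have e2 := h.left [0, 0, 1] (by simp)
  have e3 := h.right [1, 1] (by simp)
  have e4 := h.left [1, 1, 0] (by simp)
  simp only [List.cons_append, List.nil_append] at *
  simp only [S, Nat.sub_zero, Nat.sub_self]
  constructor <;> linarith

theorem P.ab {φ : List ℕ → ℝ} (h : P φ) : φ [0, 0] = φ [1, 1] := by
  have := h.next
  have := h.step.cd.1
  linarith

theorem P.recur {φ : List ℕ → ℝ} (h : P φ) :
    φ (S [0, 0]) = (φ [0, 1] - φ [0, 0]) / 2 := by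
  have n1 := h.next
  have c1 := h.cd
  have c2 := h.step.cd
  have ab := h.ab
  have ab' := h.step.ab
  have f1 := h.step.left [1, 0] (by simp)
  have z1 := h.zero [0, 0, 0] (by simp) (nf3 _ _)
  have z2 := h.zero [1, 1, 1, 0, 0] (by simp) (nf3 _ _)
  have z3 := h.zero [0, 1, 1, 0, 0, 0] (by simp)
    (fun h => nf3 0 [] (F_tail (F_tail (F_tail h))))
  have e1 := h.left [0, 1] (by simp)
  have e2 := h.left [1, 0, 1] (by simp)
  have e3 := h.right [1, 1, 0] (by simp)
  have e4 := h.left [1, 1, 0, 0] (by simp)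
  have e5 := h.right [0, 1, 1, 0, 0] (by simp)
  have e6 := h.right [0, 0] (by simp)
  simp only [List.cons_append, List.nil_append, S, Nat.sub_zero, Nat.sub_self] at *
  linarith

theorem S_iter_append (n : ℕ) (a b : List ℕ) : S^[n] (a ++ b) = S^[n] a ++ S^[n] b := by
  induction n generalizing a b with
  | zero => rfl
  | succ n ih => simp only [Function.iterate_succ, Function.comp, S_append, ih]

theorem blk_eq (n i : ℕ) (hi : i < 2) : blk i n = S^[n] [i] := by
  induction n generalizing i with
  | zero => rfl
  | succ n ih =>
    rw [blk, ih i hi, ih (1 - i) (by omega), ← S_iter_append]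
    rfl

theorem P.iter {φ : List ℕ → ℝ} (h : P φ) (n : ℕ) : P (fun l => φ (S^[n] l)) := by
  induction n with
  | zero => exact h
  | succ n ih => exact ih.step

theorem P.main {φ : List ℕ → ℝ} (h : P φ) (h1 : φ [0, 0] + φ [0, 1] = 1 / 2) (n : ℕ) :
    φ (S^[n] [0, 0]) = 1 / (6 * 2 ^ n) ∧ φ (S^[n] [0, 1]) = 1 / (3 * 2 ^ n) := by
  have key : ∀ n, φ (S^[n] [0, 0]) + φ (S^[n] [0, 1]) = 1 / 2 / 2 ^ n ∧
      |φ (S^[n] [0, 1]) - 2 * φ (S^[n] [0, 0])| = |φ [0, 1] - 2 * φ [0, 0]| := by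
    intro n
    induction n with
    | zero => simpa using h1
    | succ n ih =>
      have hn := h.iter n
      have r1 := hn.recur
      have r2 := hn.next.2
      have r3 := hn.ab
      simp only [Function.iterate_succ, Function.comp] at *
      rw [r1, r2, ← r3]
      constructor
      · rw [pow_succ, ← div_div, ← ih.1]; ring
      · rw [← ih.2, ← abs_neg]; congr 1; ring
  have z : |φ [0, 1] - 2 * φ [0, 0]| = 0 := by
    by_contra hne
    have hp : 0 < |φ [0, 1] - 2 * φ [0, 0]| := lt_of_le_of_ne (abs_nonneg _) (Ne.symm hne)
    obtain ⟨k, hk⟩ := exists_pow_lt_of_lt_one hp (show (1 / 2 : ℝ) < 1 by norm_num)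
    have hn := h.iter k
    have p1 := hn.pos [0, 0] (by simp) ⟨5, by norm_num [At, tm]⟩
    have p2 := hn.pos [0, 1] (by simp) ⟨0, by norm_num [At, tm]⟩
    obtain ⟨k1, k2⟩ := key k
    rw [← k2, one_div_pow, lt_abs] at hk
    rw [div_div, mul_comm, ← div_div] at k1
    rcases hk with hk | hk <;> linarith
  obtain ⟨k1, k2⟩ := key n
  rw [z, abs_eq_zero] at k2
  have e1 : (1 : ℝ) / (6 * 2 ^ n) = 1 / 2 / 2 ^ n / 3 := by field_simp; norm_num
  have e2 : (1 : ℝ) / (3 * 2 ^ n) = 2 * (1 / 2 / 2 ^ n / 3) := by field_simp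
  rw [e1, e2]
  constructor <;> linarith

open Classical in
/-- Any strictly positive, normalized, two-sidedly additive function `ψ` on the factors of
the two-sided Thue–Morse sequence satisfies `ψ(0⁽ⁿ⁾0⁽ⁿ⁾) = ψ(1⁽ⁿ⁾1⁽ⁿ⁾) = 1/(6·2ⁿ)` and
`ψ(0⁽ⁿ⁾1⁽ⁿ⁾) = ψ(1⁽ⁿ⁾0⁽ⁿ⁾) = 1/(3·2ⁿ)`. -/
theorem invariant_function_values (ψ : List ℕ → ℝ)
    (hpos : ∀ α : List ℕ, IsFactor α → 0 < ψ α)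
    (hone : ψ [0] + ψ [1] = 1)
    (hleft : ∀ α : List ℕ, IsFactor α →
      ψ α = (if IsFactor (0 :: α) then ψ (0 :: α) else 0) +
            (if IsFactor (1 :: α) then ψ (1 :: α) else 0))
    (hright : ∀ α : List ℕ, IsFactor α →
      ψ α = (if IsFactor (α ++ [0]) then ψ (α ++ [0]) else 0) +
            (if IsFactor (α ++ [1]) then ψ (α ++ [1]) else 0)) :
    ∀ n : ℕ,
      ψ (blk 0 n ++ blk 0 n) = 1 / (6 * 2 ^ n) ∧
      ψ (blk 1 n ++ blk 1 n) = 1 / (6 * 2 ^ n) ∧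
      ψ (blk 0 n ++ blk 1 n) = 1 / (3 * 2 ^ n) ∧
      ψ (blk 1 n ++ blk 0 n) = 1 / (3 * 2 ^ n) := by
  let Φ : List ℕ → ℝ := fun l => if IsFactor l then ψ l else 0
  have hF : ∀ l : List ℕ, l ≠ [] → (IsFactor l ↔ F l) := fun l hl => by
    rw [isFactor_iff]; simp [hl]
  have hL : ∀ l, l ≠ [] → Φ l = Φ (0 :: l) + Φ (1 :: l) := by
    intro l hl
    by_cases hf : IsFactor l
    · have := hleft l hf
      simp only [Φ]; rw [if_pos hf, this]
    · have h0 : ∀ i, ¬ IsFactor (i :: l) := fun i h =>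
        hf ((hF l hl).2 (F_tail ((hF _ (by simp)).1 h)))
      simp only [Φ, if_neg hf, if_neg (h0 _), add_zero]
  have hR : ∀ l, l ≠ [] → Φ l = Φ (l ++ [0]) + Φ (l ++ [1]) := by
    intro l hl
    by_cases hf : IsFactor l
    · have := hright l hf
      simp only [Φ]; rw [if_pos hf, this]
    · have h0 : ∀ i, ¬ IsFactor (l ++ [i]) := fun i h =>
        hf ((hF l hl).2 (F_left ((hF _ (by simp)).1 h)))
      simp only [Φ, if_neg hf, if_neg (h0 _), add_zero]
  have ne : ∀ l : List ℕ, 2 ≤ l.length → l ≠ [] := by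
    rintro l hl rfl; simp at hl
  have hP : P Φ := by
    refine ⟨fun l hl hf => ?_, fun l hl hf => ?_, fun l hl => hL l (ne l hl), fun l hl => hR l (ne l hl)⟩
    · have := (hF l (ne l hl)).2 hf
      simp only [Φ, if_pos this]; exact hpos l this
    · have : ¬ IsFactor l := fun h => hf ((hF l (ne l hl)).1 h)
      simp only [Φ, if_neg this]
  have i0 : IsFactor [0] := (hF _ (by simp)).2 ⟨0, by norm_num [At, tm]⟩
  have i1 : IsFactor [1] := (hF _ (by simp)).2 ⟨1, by norm_num [At, tm]⟩
  have j0 : Φ [0] = ψ [0] := if_pos i0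
  have j1 : Φ [1] = ψ [1] := if_pos i1
  have h1 : Φ [0, 0] + Φ [0, 1] = 1 / 2 := by
    have e0 := hR [0] (by simp)
    have e1 := hR [1] (by simp)
    have := hP.ab
    have := hP.cd.1
    simp only [List.cons_append, List.nil_append] at e0 e1
    linarith
  have FS : ∀ n l, F l → F (S^[n] l) := by
    intro n
    induction n with
    | zero => exact fun l h => h
    | succ n ih => exact fun l h => ih _ (F_S h)
  intro n
  have hv : ∀ i j, i < 2 → j < 2 → F [i, j] → ψ (blk i n ++ blk j n) = Φ (S^[n] [i, j]) := by
    intro i j hi hj hf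
    have e : blk i n ++ blk j n = S^[n] [i, j] := by
      rw [blk_eq n i hi, blk_eq n j hj, ← S_iter_append]; rfl
    have hne : S^[n] [i, j] ≠ [] := by
      have : ∀ n (l : List ℕ), l ≠ [] → S^[n] l ≠ [] := by
        intro n
        induction n with
        | zero => exact fun l h => h
        | succ n ih =>
          intro l h
          refine ih _ ?_
          cases l with
          | nil => exact absurd rfl h
          | cons x l => simp [S]
      exact this n _ (by simp)
    rw [e]
    exact (if_pos ((hF _ hne).2 (FS n _ hf))).symm
  rw [hv 0 0 (by norm_num) (by norm_num) ⟨5, by norm_num [At, tm]⟩,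
    hv 1 1 (by norm_num) (by norm_num) ⟨1, by norm_num [At, tm]⟩,
    hv 0 1 (by norm_num) (by norm_num) ⟨0, by norm_num [At, tm]⟩,
    hv 1 0 (by norm_num) (by norm_num) ⟨2, by norm_num [At, tm]⟩]
  obtain ⟨m1, m2⟩ := hP.main h1 n
  have ab := (hP.iter n).ab
  have cd := (hP.iter n).cd.1
  exact ⟨m1, ab ▸ m1, m2, cd ▸ m2⟩
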